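/- Let X be a proper metric space and let Γ be a group acting geometrically on X. Let ζ_1, …, ζ_k ∈ Γ be free generators of a free abelian subgroup Λ of Γ, and let C = ⋂_{i≤k} C_Γ(ζ_i). Assume that S = Min_X(Λ) = ⋂_{i≤k} Min_X(ζ_i) is nonempty and geodesic: for all x, y ∈ S there is an isometric embedding c : [0, d(x,y)] → X with c(0) = x, c(d(x,y)) = y and image contained in S. Then C is finitely generated. (Paper: Corollary 2, finite generation part.) -/

import Mathlib

/-!
Write `C` for the common centralizer and `S` for the common minimal set. Translate a point of `S`
into a compact fundamental domain `K` by some `γ`. Each conjugate `γ * ζ i * γ⁻¹` then displaces a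
point of `K` by a bounded amount, so proper discontinuity leaves only finitely many tuples of
conjugates. Two elements conjugating the `ζ i` to the same tuple differ by an element of `C`;
hence finitely many translates of `K` meet every `C`-orbit in `S`, that is, `C` acts cocompactly
on `S`. As `S` is connected, `C` is generated by the finitely many elements that move a compact
neighbourhood of these translates to a set meeting it.
-/

section Centralizer

variable {ι G : Type*} [Group G] {ζ : ι → G}

theorem mem_iInf_centralizer_singleton_iff {g : G} :
    g ∈ ⨅ i, Subgroup.centralizer {ζ i} ↔ ∀ i, Commute g (ζ i) := by
  simp only [Subgroup.mem_iInf, Subgroup.mem_centralizer_singleton_iff, commute_iff_eq]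

theorem inv_mul_mem_iInf_centralizer_of_conj_eq {g h : G}
    (hconj : ∀ i, g * ζ i * g⁻¹ = h * ζ i * h⁻¹) :
    g⁻¹ * h ∈ ⨅ i, Subgroup.centralizer {ζ i} := by
  refine mem_iInf_centralizer_singleton_iff.2 fun i => ?_
  calc g⁻¹ * h * ζ i = g⁻¹ * (h * ζ i * h⁻¹) * h := by group
    _ = g⁻¹ * (g * ζ i * g⁻¹) * h := by rw [hconj i]
    _ = ζ i * (g⁻¹ * h) := by group

end Centralizer

section Displacement

variable {Γ : Type*} (X : Type*) [PseudoMetricSpace X]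

/-- The translation length `|γ|_X` of `γ`: the infimum of its displacement function. -/
noncomputable def translationLength [SMul Γ X] (γ : Γ) : ℝ :=
  ⨅ x : X, dist (γ • x) x

/-- The minimal displacement set `Min_X(γ)`, on which the displacement of `γ` equals its
translation length. -/
def minDisplacementSet [SMul Γ X] (γ : Γ) : Set X :=
  {x | dist (γ • x) x = translationLength X γ}

variable {X}

theorem bddAbove_dist_smul_minDisplacementSet [SMul Γ X] (γ : Γ) :
    BddAbove ((fun x => dist (γ • x) x) '' minDisplacementSet X γ) :=
  ⟨translationLength X γ, Set.forall_mem_image.2 fun _ hx => le_of_eq hx⟩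

theorem smul_mem_minDisplacementSet_of_commute [Group Γ] [MulAction Γ X]
    [IsIsometricSMul Γ X] {g γ : Γ} (hg : Commute g γ) {x : X} (hx : x ∈ minDisplacementSet X γ) :
    g • x ∈ minDisplacementSet X γ := by
  calc dist (γ • g • x) (g • x) = dist (g • γ • x) (g • x) := by
        rw [← mul_smul, ← hg.eq, mul_smul]
    _ = dist (γ • x) x := dist_smul g _ _
    _ = translationLength X γ := hx

end Displacement

section Geodesic

variable {X : Type*} [PseudoMetricSpace X]

/-- A set is geodesic if any two of its points are joined inside it by an isometrically embedded
interval. The geodesic is a map on all of `ℝ`, with arbitrary values outside the interval. -/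
def IsGeodesicSet (S : Set X) : Prop :=
  ∀ x ∈ S, ∀ y ∈ S, ∃ c : ℝ → X,
    c 0 = x ∧ c (dist x y) = y ∧
    (∀ t ∈ Set.Icc (0 : ℝ) (dist x y), c t ∈ S) ∧
    (∀ s ∈ Set.Icc (0 : ℝ) (dist x y), ∀ t ∈ Set.Icc (0 : ℝ) (dist x y),
      dist (c s) (c t) = |s - t|)

theorem IsGeodesicSet.isPreconnected {S : Set X} (hS : IsGeodesicSet S) : IsPreconnected S := by
  refine isPreconnected_of_forall_pair fun x hx y hy => ?_
  obtain ⟨c, hc₀, hc₁, hcS, hcdist⟩ := hS x hx y hy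
  have hcont : ContinuousOn c (Set.Icc 0 (dist x y)) :=
    (LipschitzOnWith.of_dist_le_mul (K := 1) fun s hs t ht => by
      rw [hcdist s hs t ht, NNReal.coe_one, one_mul, Real.dist_eq]).continuousOn
  exact ⟨c '' Set.Icc 0 (dist x y), Set.image_subset_iff.2 hcS,
    ⟨0, Set.left_mem_Icc.2 dist_nonneg, hc₀⟩, ⟨dist x y, Set.right_mem_Icc.2 dist_nonneg, hc₁⟩,
    isPreconnected_Icc.image c hcont⟩

end Geodesic

section Generation

variable {G X : Type*} [Group G] [TopologicalSpace X] [MulAction G X] [ContinuousConstSMul G X]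
  {S : Set X}

theorem closure_setOf_image_smul_inter_nonempty_eq_top {U : Set X} (hS : IsPreconnected S)
    (hinv : ∀ g : G, ∀ x ∈ S, g • x ∈ S) (hU : IsOpen U) (hne : (S ∩ U).Nonempty)
    (hcov : ∀ x ∈ S, ∃ g : G, g • x ∈ U) :
    Subgroup.closure {g : G | ((g • ·) '' U ∩ U).Nonempty} = ⊤ := by
  set H := Subgroup.closure {g : G | ((g • ·) '' U ∩ U).Nonempty}
  let saturation (P : Set G) : Set X := ⋃ g ∈ P, (g • ·) ⁻¹' U
  have isOpen_saturation (P : Set G) : IsOpen (saturation P) :=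
    isOpen_biUnion fun g _ => hU.preimage (continuous_const_smul g)
  have mem_saturation {P : Set G} {x : X} : x ∈ saturation P ↔ ∃ g ∈ P, g • x ∈ U := by
    simp only [saturation, Set.mem_iUnion₂, Set.mem_preimage, exists_prop]
  refine (Subgroup.eq_top_iff' H).2 fun g => by_contra fun hg => ?_
  obtain ⟨x₀, hx₀S, hx₀U⟩ := hne
  have hcover : S ⊆ saturation H ∪ saturation (H : Set G)ᶜ := fun x hx => by
    obtain ⟨k, hk⟩ := hcov x hx
    exact (em (k ∈ H)).imp (fun h => mem_saturation.2 ⟨k, h, hk⟩)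
      fun h => mem_saturation.2 ⟨k, h, hk⟩
  obtain ⟨x, -, hxH, hxHc⟩ := hS _ _ (isOpen_saturation _) (isOpen_saturation _) hcover
    ⟨x₀, hx₀S, mem_saturation.2 ⟨1, H.one_mem, by rwa [one_smul]⟩⟩
    ⟨g⁻¹ • x₀, hinv _ _ hx₀S, mem_saturation.2 ⟨g, hg, by rwa [smul_inv_smul]⟩⟩
  obtain ⟨h, hh, hhU⟩ := mem_saturation.1 hxH
  obtain ⟨k, hk, hkU⟩ := mem_saturation.1 hxHc
  have hkh : k * h⁻¹ ∈ H :=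
    Subgroup.subset_closure ⟨k • x, ⟨h • x, hhU, by simp only [mul_smul, inv_smul_smul]⟩, hkU⟩
  exact hk ((H.mul_mem_cancel_right (H.inv_mem hh)).1 hkh)

theorem group_fg_of_isConnected_of_isCompact [WeaklyLocallyCompactSpace X]
    [ProperlyDiscontinuousSMul G X] (hS : IsConnected S) (hinv : ∀ g : G, ∀ x ∈ S, g • x ∈ S)
    {K : Set X} (hK : IsCompact K) (hcov : ∀ x ∈ S, ∃ g : G, g • x ∈ K) : Group.FG G := by
  obtain ⟨L, hL, hKL⟩ := exists_compact_superset hK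
  obtain ⟨x, hx⟩ := hS.nonempty
  obtain ⟨g, hg⟩ := hcov x hx
  refine Group.fg_iff.2 ⟨_, closure_setOf_image_smul_inter_nonempty_eq_top hS.isPreconnected hinv
    isOpen_interior ⟨g • x, hinv g x hx, hKL hg⟩
    fun y hy => (hcov y hy).imp fun _ h => hKL h, ?_⟩
  exact (ProperlyDiscontinuousSMul.finite_disjoint_inter_image hL hL).subset fun _ =>
    Set.Nonempty.mono (Set.inter_subset_inter (Set.image_mono interior_subset) interior_subset)

end Generation

section Cocompact

variable {ι Γ X : Type*} {ζ : ι → Γ} {S K : Set X}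

theorem exists_isCompact_centralizer_smul_mem_of_finite_conj [Group Γ] [TopologicalSpace X]
    [MulAction Γ X] [ContinuousConstSMul Γ X] (hK : IsCompact K)
    (hcov : ∀ x ∈ S, ∃ γ : Γ, γ • x ∈ K)
    (hfin : ((fun γ i => γ * ζ i * γ⁻¹) '' {γ : Γ | ∃ x ∈ S, γ • x ∈ K}).Finite) :
    ∃ L : Set X, IsCompact L ∧
      ∀ x ∈ S, ∃ g : ↥(⨅ i, Subgroup.centralizer {ζ i}), g • x ∈ L := by
  obtain ⟨F, -, hF⟩ := Set.exists_subset_bijOn {γ : Γ | ∃ x ∈ S, γ • x ∈ K}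
    (fun γ i => γ * ζ i * γ⁻¹)
  have hFfin : F.Finite := hF.finite_iff_finite.2 hfin
  refine ⟨⋃ f ∈ F, (f⁻¹ • ·) '' K,
    hFfin.isCompact_biUnion fun f _ => hK.image (continuous_const_smul f⁻¹), fun x hx => ?_⟩
  obtain ⟨γ, hγ⟩ := hcov x hx
  obtain ⟨f, hfF, hfγ⟩ := hF.surjOn (Set.mem_image_of_mem _ ⟨x, hx, hγ⟩)
  exact ⟨⟨f⁻¹ * γ, inv_mul_mem_iInf_centralizer_of_conj_eq (congrFun hfγ)⟩,
    Set.mem_biUnion hfF ⟨γ • x, hγ, (mul_smul f⁻¹ γ x).symm⟩⟩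

variable [PseudoMetricSpace X] [ProperSpace X]

theorem finite_setOf_exists_dist_smul_le [SMul Γ X] [ProperlyDiscontinuousSMul Γ X]
    (hK : IsCompact K) (r : ℝ) : {γ : Γ | ∃ x ∈ K, dist (γ • x) x ≤ r}.Finite := by
  refine (ProperlyDiscontinuousSMul.finite_disjoint_inter_image hK
    (hK.cthickening (r := r))).subset ?_
  rintro γ ⟨x, hxK, hx⟩
  exact ⟨γ • x, Set.mem_image_of_mem _ hxK, Metric.mem_cthickening_of_dist_le _ x r K hxK hx⟩

variable [Group Γ] [MulAction Γ X] [IsIsometricSMul Γ X] [ProperlyDiscontinuousSMul Γ X] [Finite ι]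

theorem finite_image_conj_of_bddAbove_dist_smul (hK : IsCompact K)
    (hbdd : ∀ i, BddAbove ((fun x => dist (ζ i • x) x) '' S)) :
    ((fun γ i => γ * ζ i * γ⁻¹) '' {γ : Γ | ∃ x ∈ S, γ • x ∈ K}).Finite := by
  choose r hr using hbdd
  refine (Set.Finite.pi' fun i => finite_setOf_exists_dist_smul_le (Γ := Γ) hK (r i)).subset ?_
  rintro _ ⟨γ, ⟨x, hxS, hxK⟩, rfl⟩ i
  refine ⟨γ • x, hxK, ?_⟩
  calc dist ((γ * ζ i * γ⁻¹) • γ • x) (γ • x) = dist (γ • ζ i • x) (γ • x) := by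
        simp only [mul_smul, inv_smul_smul]
    _ = dist (ζ i • x) x := dist_smul γ _ _
    _ ≤ r i := hr i (Set.mem_image_of_mem _ hxS)

theorem fg_iInf_centralizer_of_isConnected (hK : IsCompact K)
    (hcov : ∀ x ∈ S, ∃ γ : Γ, γ • x ∈ K) (hS : IsConnected S)
    (hinv : ∀ g ∈ ⨅ i, Subgroup.centralizer {ζ i}, ∀ x ∈ S, g • x ∈ S)
    (hbdd : ∀ i, BddAbove ((fun x => dist (ζ i • x) x) '' S)) :
    Subgroup.FG (⨅ i, Subgroup.centralizer {ζ i}) := by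
  obtain ⟨L, hL, hLcov⟩ := exists_isCompact_centralizer_smul_mem_of_finite_conj hK hcov
    (finite_image_conj_of_bddAbove_dist_smul hK hbdd)
  have : ContinuousConstSMul ↥(⨅ i, Subgroup.centralizer {ζ i}) X :=
    ⟨fun g => continuous_const_smul (g : Γ)⟩
  exact (Group.fg_iff_subgroup_fg _).1 <|
    group_fg_of_isConnected_of_isCompact hS (fun g => hinv g g.2) hL hLcov

end Cocompact

theorem properlyDiscontinuousSMul_of_finite_image_inter_self {Γ X : Type*} [TopologicalSpace X]
    [SMul Γ X]
    (hfin : ∀ K : Set X, IsCompact K → {γ : Γ | ((γ • ·) '' K ∩ K).Nonempty}.Finite) :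
    ProperlyDiscontinuousSMul Γ X where
  finite_disjoint_inter_image {K L} hK hL :=
    (hfin (K ∪ L) (hK.union hL)).subset fun _ => Set.Nonempty.mono <|
      Set.inter_subset_inter (Set.image_mono Set.subset_union_left) Set.subset_union_right

theorem corollary2_centralizer_finitely_generated_general
    {X : Type*} [PseudoMetricSpace X] [ProperSpace X]
    {Γ : Type*} [Group Γ] [MulAction Γ X]
    (isom : ∀ (γ : Γ) (x y : X), dist (γ • x) (γ • y) = dist x y)
    (propdisc : ∀ K : Set X, IsCompact K →
      {γ : Γ | ((fun x => γ • x) '' K ∩ K).Nonempty}.Finite)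
    (cocpt : ∃ K : Set X, IsCompact K ∧ ∀ x : X, ∃ γ : Γ, γ • x ∈ K)
    {ι : Type*} [Finite ι] (ζ : ι → Γ)
    (hconn : IsConnected (⋂ i, minDisplacementSet X (ζ i))) :
    Subgroup.FG (⨅ i, Subgroup.centralizer {ζ i}) := by
  have : IsIsometricSMul Γ X := ⟨fun γ => Isometry.of_dist_eq (isom γ)⟩
  have : ProperlyDiscontinuousSMul Γ X :=
    properlyDiscontinuousSMul_of_finite_image_inter_self propdisc
  obtain ⟨K, hK, hcov⟩ := cocpt
  refine fg_iInf_centralizer_of_isConnected hK (fun x _ => hcov x) hconn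
    (fun g hg x hx => Set.mem_iInter.2 fun i => ?_) fun i => ?_
  · exact smul_mem_minDisplacementSet_of_commute (mem_iInf_centralizer_singleton_iff.1 hg i)
      (Set.mem_iInter.1 hx i)
  · exact (bddAbove_dist_smul_minDisplacementSet (ζ i)).mono
      (Set.image_mono (Set.iInter_subset _ i))

/-- **Corollary 2 (finite generation part).** Let `X` be a proper metric space with
a geometric action of `Γ`. Let `ζ 1, …, ζ k` be free generators of a free abelian
subgroup of `Γ`. If `S = Min_X(Λ) = ⋂ i, Min_X(ζ i)` is nonempty and geodesic,
then the common centralizer `C = ⋂ i, C_Γ(ζ i)` is finitely generated. -/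
theorem corollary2_centralizer_finitely_generated
    {X : Type*} [MetricSpace X] [ProperSpace X]
    {Γ : Type*} [Group Γ] [MulAction Γ X]
    -- Γ acts by isometries
    (isom : ∀ (γ : Γ) (x y : X), dist (γ • x) (γ • y) = dist x y)
    -- Γ acts properly discontinuously
    (propdisc : ∀ K : Set X, IsCompact K →
      {γ : Γ | ((fun x => γ • x) '' K ∩ K).Nonempty}.Finite)
    -- Γ acts cocompactly
    (cocpt : ∃ K : Set X, IsCompact K ∧ ∀ x : X, ∃ γ : Γ, γ • x ∈ K)
    -- ζ 1, …, ζ k are free generators of a free abelian subgroup of Γ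
    {k : ℕ} (ζ : Fin k → Γ)
    (φ : Multiplicative (Fin k → ℤ) →* Γ)
    (hφinj : Function.Injective φ)
    (hφζ : ∀ i : Fin k, φ (Multiplicative.ofAdd (Pi.single i 1)) = ζ i)
    -- S = Min_X(Λ)
    (S : Set X)
    (hS : S = ⋂ i : Fin k,
      {x : X | dist (ζ i • x) x = ⨅ y : X, dist (ζ i • y) y})
    (hne : S.Nonempty)
    -- S is geodesic
    (hgeo : ∀ x ∈ S, ∀ y ∈ S, ∃ c : ℝ → X,
      c 0 = x ∧ c (dist x y) = y ∧
      (∀ t ∈ Set.Icc (0 : ℝ) (dist x y), c t ∈ S) ∧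
      (∀ s ∈ Set.Icc (0 : ℝ) (dist x y), ∀ t ∈ Set.Icc (0 : ℝ) (dist x y),
        dist (c s) (c t) = |s - t|)) :
    Subgroup.FG (⨅ i : Fin k, Subgroup.centralizer {ζ i}) := by
  subst hS
  exact corollary2_centralizer_finitely_generated_general isom propdisc cocpt ζ
    ⟨hne, IsGeodesicSet.isPreconnected hgeo⟩
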